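/- Let H be a separable Hilbert space, A ∈ B(H), and let Φ : T(H) → T(H) be the quantum operation Φ(T) = A* T A. Then: (a) Φ is degradable (indeed Γ∘Φ is complementary to Φ, where Γ : T(H) → ℂ is the quantum operation Γ(T) = tr(T)); (b) Φ is anti-degradable if and only if Φ is strongly entanglement breaking, which holds if and only if there is a positive operator R ∈ T(H) with Φ(T) = tr(AA*T) R for all T ∈ T(H) (forcing A to have rank at most one when A ≠ 0). -/

import Mathlib

/-!
Each of the three conditions in part (b) is equivalent to `A` having rank at most one,
`A = |a⟩⟨b|`.

*Complements.* `Φ` is the conjugation `T ↦ G T G*` with `G = A*`. If `B : H1 → H2 ⊗ H3` dilates a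
conjugation, polarizing the partial trace identity forces `B x = G x ⊗ k` for a fixed vector `k`
(`exists_eq_tensor_of_partialTrace`). Hence every complement is `T ↦ tr(G T G*) |k⟩⟨k|`
(`complement_of_conj`), a function of `Φ(T)` alone: every conjugation is degradable. The choice
`H3 = ℂ`, `k = 1` gives the complement `Γ ∘ Φ`.

*Anti-degradability.* If `A = |a⟩⟨b|`, a complement of `Φ` is again a conjugation, by a multiple
of `|k⟩⟨a|`, so it is degradable. Conversely `Φ`, moved to an isometric copy of `H`, is a complement
of the trace map `Γ ∘ Φ`; degrading that map writes `Φ(T)` as `tr(A* T A) R` for a fixed operator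
`R`, and testing on `T = |x⟩⟨x|` shows that the range of `A*` is at most a line.

*Strong entanglement breaking.* Kraus decompositions of a conjugation are unique up to scalars
(`kraus_of_conj`), so `id ⊗ Φ` is conjugation by `I ⊗ A*`. For `A = |a⟩⟨b|` the output is supported
on `K ⊗ b` and is a single product operator. If instead `A* x₀`, `A* x₁` are independent, the vector
`e₀ ⊗ x₀ + e₁ ⊗ x₁` in `ℂ² ⊗ H` is sent to `w = e₀ ⊗ A* x₀ + e₁ ⊗ A* x₁`. In a separable
decomposition of `|w⟩⟨w|` each term `ρ₁ ⊗ ρ₂` vanishes on every product vector orthogonal to `w`;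
the vectors `e₀ ⊗ y`, `e₁ ⊗ y`, `(e₀ + e₁) ⊗ y` then give `ρ₂ = 0`, a contradiction
(`not_cdSeparable`).

*Trace form.* For `A = |a⟩⟨b|`, `Φ(T) = ⟪a, T a⟫ |b⟩⟨b|` and `tr(A A* T) = ‖b‖² ⟪a, T a⟫`, so
`R = ‖b‖⁻² |b⟩⟨b|`. The converse is the same test on `T = |x⟩⟨x|`.

The witnessing spaces in the definitions live in `Type`, while `H` may live in any universe; this is
why isometric copies of `H` and Hilbert bases indexed by subsets of `ℕ` appear.
-/

noncomputable section

namespace PaperInf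

open scoped ComplexInnerProductSpace ComplexOrder
open ContinuousLinearMap TopologicalSpace

/-- A bundled separable complex Hilbert space. -/
structure SepHilbert : Type 1 where
  carrier : Type
  [nacg : NormedAddCommGroup carrier]
  [ips : InnerProductSpace ℂ carrier]
  [cs : CompleteSpace carrier]
  [sep : SeparableSpace carrier]

attribute [instance] SepHilbert.nacg SepHilbert.ips SepHilbert.cs SepHilbert.sep

variable {H H1 H2 H3 H4 K W W' : Type*}
  [NormedAddCommGroup H] [InnerProductSpace ℂ H] [CompleteSpace H]
  [NormedAddCommGroup H1] [InnerProductSpace ℂ H1] [CompleteSpace H1]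
  [NormedAddCommGroup H2] [InnerProductSpace ℂ H2] [CompleteSpace H2]
  [NormedAddCommGroup H3] [InnerProductSpace ℂ H3] [CompleteSpace H3]
  [NormedAddCommGroup H4] [InnerProductSpace ℂ H4] [CompleteSpace H4]
  [NormedAddCommGroup K] [InnerProductSpace ℂ K] [CompleteSpace K]
  [NormedAddCommGroup W] [InnerProductSpace ℂ W] [CompleteSpace W]
  [NormedAddCommGroup W'] [InnerProductSpace ℂ W'] [CompleteSpace W']

/-- `T` is a trace-class operator: it admits a nuclear decomposition
`T = Σ_n |x_n⟩⟨y_n|` with `Σ_n ‖x_n‖ ‖y_n‖ < ∞`. -/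
def IsTraceClass (T : H →L[ℂ] H) : Prop :=
  ∃ x y : ℕ → H, Summable (fun n => ‖x n‖ * ‖y n‖) ∧
    ∀ v, HasSum (fun n => ⟪y n, v⟫ • x n) (T v)

/-- The rank-one operator `|x⟩⟨y| : H1 → H2`, `v ↦ ⟪y, v⟫ x`. -/
def ketbra (x : H2) (y : H1) : H1 →L[ℂ] H2 :=
  (innerSL ℂ y).smulRight x

/-- The trace of an operator, computed in a (choice of) Hilbert basis.  On trace-class
operators this is the usual basis-independent trace. -/
def trace (T : H →L[ℂ] H) : ℂ :=
  ∑' i : (exists_hilbertBasis ℂ H).choose, ⟪(i : H), T (i : H)⟫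

/-- `ρ` is a state: a positive trace-class operator of trace one. -/
def IsState (ρ : H →L[ℂ] H) : Prop :=
  IsTraceClass ρ ∧ ρ.IsPositive ∧ trace ρ = 1

/-- `Φ` is a quantum operation from `T(H1)` to `T(H2)`: a (trace-norm bounded linear) map whose
dual is a normal completely positive map; equivalently a map admitting a Kraus decomposition
`Φ(T) = Σ_j A_j T A_j*` with `Σ_j A_j* A_j` convergent in the strong operator topology to a
bounded operator. -/
def IsQuantumOperation (Φ : (H1 →L[ℂ] H1) → (H2 →L[ℂ] H2)) : Prop :=
  ∃ (ι : Type) (_ : Countable ι) (A : ι → H1 →L[ℂ] H2) (S : H1 →L[ℂ] H1),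
    (∀ x, HasSum (fun j => adjoint (A j) (A j x)) (S x)) ∧
    ∀ T, IsTraceClass T → HasSum (fun j => A j ∘L T ∘L adjoint (A j)) (Φ T)

/-- A quantum channel is a trace-preserving quantum operation. -/
def IsQuantumChannel (Φ : (H1 →L[ℂ] H1) → (H2 →L[ℂ] H2)) : Prop :=
  IsQuantumOperation Φ ∧ ∀ T, IsTraceClass T → trace (Φ T) = trace T

/-- A realization of `W` as the Hilbert-space tensor product `K ⊗ H`:
a map `t : K → H → W` with `⟪t x y, t x' y'⟫ = ⟪x,x'⟫ ⟪y,y'⟫` whose range spans a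
dense subspace. -/
structure TensorStruct (K H W : Type*) [NormedAddCommGroup K] [InnerProductSpace ℂ K]
    [NormedAddCommGroup H] [InnerProductSpace ℂ H]
    [NormedAddCommGroup W] [InnerProductSpace ℂ W] : Type _ where
  t : K → H → W
  inner_t : ∀ (x x' : K) (y y' : H), ⟪t x y, t x' y'⟫ = ⟪x, x'⟫ * ⟪y, y'⟫
  dense_t : (Submodule.span ℂ {w : W | ∃ x y, w = t x y}).topologicalClosure = ⊤

/-- `P = tr_{H'}(S)`: the partial trace of `S ∈ B(W)`, `W = H ⊗ H'`, over the second factor. -/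
def IsPartialTraceRight {H' : Type*} [NormedAddCommGroup H'] [InnerProductSpace ℂ H']
    (ts : TensorStruct H H' W) (S : W →L[ℂ] W) (P : H →L[ℂ] H) : Prop :=
  ∃ (ι : Type) (_ : Countable ι) (b : HilbertBasis ι ℂ H'),
    ∀ x y : H, HasSum (fun i => ⟪ts.t x (b i), S (ts.t y (b i))⟫) ⟪x, P y⟫

/-- `P = tr_{H}(S)`: the partial trace of `S ∈ B(W)`, `W = H ⊗ H'`, over the first factor. -/
def IsPartialTraceLeft {H' : Type*} [NormedAddCommGroup H'] [InnerProductSpace ℂ H']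
    (ts : TensorStruct H H' W) (S : W →L[ℂ] W) (P : H' →L[ℂ] H') : Prop :=
  ∃ (ι : Type) (_ : Countable ι) (b : HilbertBasis ι ℂ H),
    ∀ x y : H', HasSum (fun i => ⟪ts.t (b i) x, S (ts.t (b i) y)⟫) ⟪x, P y⟫

/-- The quantum operation `Ψ : T(H1) → T(H3)` is complementary to the quantum operation
`Φ : T(H1) → T(H2)`: there is a bounded operator `A : H1 → H2 ⊗ H3` with
`Φ(T) = tr_{H3}(A T A*)` and `Ψ(T) = tr_{H2}(A T A*)` for all trace-class `T`. -/
def IsComplementary (Ψ : (H1 →L[ℂ] H1) → (H3 →L[ℂ] H3))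
    (Φ : (H1 →L[ℂ] H1) → (H2 →L[ℂ] H2)) : Prop :=
  ∃ (W : SepHilbert) (ts : TensorStruct H2 H3 W.carrier) (A : H1 →L[ℂ] W.carrier),
    ∀ T, IsTraceClass T →
      IsPartialTraceRight ts (A ∘L T ∘L adjoint A) (Φ T) ∧
      IsPartialTraceLeft ts (A ∘L T ∘L adjoint A) (Ψ T)

/-- `Φ` is degradable: there is a quantum operation `Γ` with `Γ ∘ Φ` complementary to `Φ`;
equivalently (and as formalized here), for every quantum operation `Ψ` complementary to `Φ`
there is a quantum operation `Γ` with `Γ ∘ Φ = Ψ`. -/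
def Degradable (Φ : (H1 →L[ℂ] H1) → (H2 →L[ℂ] H2)) : Prop :=
  ∀ (K : SepHilbert) (Ψ : (H1 →L[ℂ] H1) → (K.carrier →L[ℂ] K.carrier)),
    IsQuantumOperation Ψ → IsComplementary Ψ Φ →
      ∃ Γ : (H2 →L[ℂ] H2) → (K.carrier →L[ℂ] K.carrier),
        IsQuantumOperation Γ ∧ ∀ T, IsTraceClass T → Γ (Φ T) = Ψ T

/-- `Φ` is anti-degradable: some (equivalently, by the uniqueness of complements up to
partial isometries, every) quantum operation complementary to `Φ` is degradable. -/
def AntiDegradable (Φ : (H1 →L[ℂ] H1) → (H2 →L[ℂ] H2)) : Prop :=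
  ∀ (K : SepHilbert) (Ψ : (H1 →L[ℂ] H1) → (K.carrier →L[ℂ] K.carrier)),
    IsQuantumOperation Ψ → IsComplementary Ψ Φ → Degradable Ψ

/-- `τ = ρ1 ⊗ ρ2` on `W = K ⊗ H`. -/
def IsProductOp (ts : TensorStruct K H W) (ρ1 : K →L[ℂ] K) (ρ2 : H →L[ℂ] H)
    (τ : W →L[ℂ] W) : Prop :=
  ∀ (x x' : K) (y y' : H), ⟪ts.t x y, τ (ts.t x' y')⟫ = ⟪x, ρ1 x'⟫ * ⟪y, ρ2 y'⟫

/-- `ρ` (a positive trace-class operator on `W = K ⊗ H`) is countably decomposable separable: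
`ρ = Σ_n p_n ρ_n^(1) ⊗ ρ_n^(2)` (trace-norm convergent) for states `ρ_n^(1)`, `ρ_n^(2)` and
nonnegative summable weights `p_n`. -/
def CDSeparable (ts : TensorStruct K H W) (ρ : W →L[ℂ] W) : Prop :=
  ∃ (p : ℕ → ℝ) (ρ1 : ℕ → K →L[ℂ] K) (ρ2 : ℕ → H →L[ℂ] H) (τ : ℕ → W →L[ℂ] W),
    (∀ n, 0 ≤ p n) ∧ Summable p ∧
    (∀ n, IsState (ρ1 n)) ∧ (∀ n, IsState (ρ2 n)) ∧
    (∀ n, IsProductOp ts (ρ1 n) (ρ2 n) (τ n)) ∧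
    HasSum (fun n => (p n : ℂ) • τ n) ρ

/-- `σ = (id_K ⊗ Φ)(ρ)`, where `ρ ∈ T(K ⊗ H1)`, `σ ∈ T(K ⊗ H2)`: for a Kraus decomposition
`Φ = Σ_j A_j (·) A_j*` one has `σ = Σ_j (I ⊗ A_j) ρ (I ⊗ A_j)*`. -/
def IsIdTensorApply (ts : TensorStruct K H1 W) (ts' : TensorStruct K H2 W')
    (Φ : (H1 →L[ℂ] H1) → (H2 →L[ℂ] H2)) (ρ : W →L[ℂ] W) (σ : W' →L[ℂ] W') : Prop :=
  ∃ (ι : Type) (_ : Countable ι) (A : ι → H1 →L[ℂ] H2) (S : H1 →L[ℂ] H1),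
    (∀ x, HasSum (fun j => adjoint (A j) (A j x)) (S x)) ∧
    (∀ T, IsTraceClass T → HasSum (fun j => A j ∘L T ∘L adjoint (A j)) (Φ T)) ∧
    ∃ L : ι → (W →L[ℂ] W'),
      (∀ j x y, L j (ts.t x y) = ts'.t x (A j y)) ∧
      HasSum (fun j => L j ∘L ρ ∘L adjoint (L j)) σ

/-- `Φ` is strongly entanglement breaking: for every separable Hilbert space `K` and every
state `ρ` on `K ⊗ H1`, the state `(id_K ⊗ Φ)(ρ)` is countably decomposable separable. -/
def IsSEB (Φ : (H1 →L[ℂ] H1) → (H2 →L[ℂ] H2)) : Prop :=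
  ∀ (K W W' : SepHilbert) (ts : TensorStruct K.carrier H1 W.carrier)
    (ts' : TensorStruct K.carrier H2 W'.carrier)
    (ρ : W.carrier →L[ℂ] W.carrier) (σ : W'.carrier →L[ℂ] W'.carrier),
    IsState ρ → IsIdTensorApply ts ts' Φ ρ σ → CDSeparable ts' σ


set_option linter.unusedSectionVars false

/-! ### Trace-class operators and the trace -/

@[simp]
lemma ketbra_apply (x : H2) (y v : H1) : ketbra x y v = ⟪y, v⟫ • x := rfl

lemma adjoint_ketbra (x : H2) (y : H1) : adjoint (ketbra x y) = ketbra y x := by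
  symm
  rw [eq_adjoint_iff]
  intro u v
  simp [inner_smul_left, inner_smul_right, mul_comm]

lemma comp_ketbra_comp_adjoint (G : H1 →L[ℂ] H2) (x y : H1) :
    G ∘L ketbra x y ∘L adjoint G = ketbra (G x) (G y) := by
  ext v
  simp [adjoint_inner_right]

lemma isTraceClass_ketbra (x y : H) : IsTraceClass (ketbra x y) := by
  refine ⟨fun n => if n = 0 then x else 0, fun n => if n = 0 then y else 0, ?_, ?_⟩
  · apply summable_of_ne_finset_zero (s := {0})
    intro n hn
    simp at hn
    simp [hn]
  · intro v
    have h := hasSum_ite_eq (0 : ℕ) (⟪y, v⟫ • x)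
    have e : (fun n => ⟪if n = 0 then y else 0, v⟫ • (if n = 0 then x else 0))
        = fun n : ℕ => if n = 0 then ⟪y, v⟫ • x else 0 := by
      ext n
      by_cases hn : n = 0 <;> simp [hn]
    exact e ▸ h

lemma IsTraceClass.conj {T : H1 →L[ℂ] H1} (hT : IsTraceClass T) (C : H1 →L[ℂ] H2)
    (D : H2 →L[ℂ] H1) : IsTraceClass (C ∘L T ∘L D) := by
  obtain ⟨x, y, hs, h⟩ := hT
  refine ⟨fun n => C (x n), fun n => adjoint D (y n), ?_, ?_⟩
  · refine Summable.of_nonneg_of_le (fun n => by positivity) (fun n => ?_)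
      (hs.mul_left (‖C‖ * ‖adjoint D‖))
    calc ‖C (x n)‖ * ‖adjoint D (y n)‖ ≤ (‖C‖ * ‖x n‖) * (‖adjoint D‖ * ‖y n‖) := by
          gcongr
          · exact C.le_opNorm _
          · exact (adjoint D).le_opNorm _
      _ = _ := by ring
  · intro v
    have := (h (D v)).mapL C
    simpa [adjoint_inner_left] using this

lemma IsTraceClass.smul {T : H →L[ℂ] H} (hT : IsTraceClass T) (c : ℂ) :
    IsTraceClass (c • T) := by
  have h := hT.conj (c • ContinuousLinearMap.id ℂ H) (ContinuousLinearMap.id ℂ H)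
  have e : (c • ContinuousLinearMap.id ℂ H) ∘L T ∘L ContinuousLinearMap.id ℂ H = c • T := by
    ext v; simp
  rwa [e] at h

/-- A consequence of the Cauchy–Schwarz inequality and Bessel's inequality. -/
lemma sum_norm_inner_mul_inner_le {ι : Type*} {e : ι → H} (he : Orthonormal ℂ e) (x y : H)
    (s : Finset ι) : ∑ i ∈ s, ‖⟪y, e i⟫ * ⟪e i, x⟫‖ ≤ ‖x‖ * ‖y‖ := by
  have h1 : ∑ i ∈ s, ‖⟪e i, y⟫‖ ^ 2 ≤ ‖y‖ ^ 2 := he.sum_inner_products_le y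
  have h2 : ∑ i ∈ s, ‖⟪e i, x⟫‖ ^ 2 ≤ ‖x‖ ^ 2 := he.sum_inner_products_le x
  calc ∑ i ∈ s, ‖⟪y, e i⟫ * ⟪e i, x⟫‖ = ∑ i ∈ s, ‖⟪e i, y⟫‖ * ‖⟪e i, x⟫‖ := by
        refine Finset.sum_congr rfl fun i _ => ?_
        rw [norm_mul, norm_inner_symm]
    _ ≤ √(∑ i ∈ s, ‖⟪e i, y⟫‖ ^ 2) * √(∑ i ∈ s, ‖⟪e i, x⟫‖ ^ 2) :=
        Real.sum_mul_le_sqrt_mul_sqrt _ _ _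
    _ ≤ ‖y‖ * ‖x‖ := by
        gcongr
        · exact Real.sqrt_le_iff.2 ⟨norm_nonneg _, h1⟩
        · exact Real.sqrt_le_iff.2 ⟨norm_nonneg _, h2⟩
    _ = _ := mul_comm _ _

/-- The diagonal sum of a nuclear operator `Σ_n |x_n⟩⟨y_n|` in any Hilbert basis is
`Σ_n ⟪y_n, x_n⟫`; the right-hand side does not mention the basis. -/
lemma hasSum_diag_of_nuclear {ι : Type*} (b : HilbertBasis ι ℂ H) {T : H →L[ℂ] H} {x y : ℕ → H}
    (hs : Summable fun n => ‖x n‖ * ‖y n‖) (h : ∀ v, HasSum (fun n => ⟪y n, v⟫ • x n) (T v)) :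
    HasSum (fun i => ⟪b i, T (b i)⟫) (∑' n, ⟪y n, x n⟫) := by
  have hrow : ∀ n, Summable fun i => ‖⟪y n, b i⟫ * ⟪b i, x n⟫‖ := fun n =>
    summable_of_sum_le (c := ‖x n‖ * ‖y n‖) (fun _ => norm_nonneg _)
      fun s => sum_norm_inner_mul_inner_le b.orthonormal _ _ s
  have hsum : Summable fun q : ℕ × ι => ⟪y q.1, b q.2⟫ * ⟪b q.2, x q.1⟫ := by
    refine Summable.of_norm ?_
    rw [summable_prod_of_nonneg fun _ => norm_nonneg _]
    refine ⟨hrow, Summable.of_nonneg_of_le (fun n => tsum_nonneg fun _ => norm_nonneg _)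
      (fun n => ?_) hs⟩
    exact (hrow n).tsum_le_of_sum_le fun s => sum_norm_inner_mul_inner_le b.orthonormal _ _ s
  have hfib := hsum.hasSum.prod_fiberwise fun n => b.hasSum_inner_mul_inner (y n) (x n)
  rw [hfib.tsum_eq]
  have hswap := (Equiv.prodComm ι ℕ).hasSum_iff.2 hsum.hasSum
  refine hswap.prod_fiberwise fun i => ?_
  have := (h (b i)).mapL (innerSL ℂ (b i))
  simpa [inner_smul_right] using this

lemma hasSum_trace {ι : Type*} (b : HilbertBasis ι ℂ H) {T : H →L[ℂ] H} (hT : IsTraceClass T) :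
    HasSum (fun i => ⟪b i, T (b i)⟫) (trace T) := by
  obtain ⟨x, y, hs, h⟩ := hT
  obtain ⟨b0, hb0⟩ := (exists_hilbertBasis ℂ H).choose_spec
  have h0 := hasSum_diag_of_nuclear b0 hs h
  have e : trace T = ∑' n, ⟪y n, x n⟫ := by
    rw [← h0.tsum_eq, trace, hb0]
  rw [e]
  exact hasSum_diag_of_nuclear b hs h

lemma trace_ketbra (x y : H) : trace (ketbra x y) = ⟪y, x⟫ := by
  obtain ⟨w, b, -⟩ := exists_hilbertBasis ℂ H
  refine (hasSum_trace b (isTraceClass_ketbra x y)).unique ?_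
  simpa [inner_smul_right] using b.hasSum_inner_mul_inner y x

lemma trace_smul {T : H →L[ℂ] H} (hT : IsTraceClass T) (c : ℂ) :
    trace (c • T) = c * trace T := by
  obtain ⟨w, b, -⟩ := exists_hilbertBasis ℂ H
  refine (hasSum_trace b (hT.smul c)).unique ?_
  simpa [inner_smul_right] using (hasSum_trace b hT).mul_left c

lemma isPositive_ketbra (x : H) : (ketbra x x).IsPositive := by
  rw [isPositive_iff_complex]
  intro v
  have : ⟪ketbra x x v, v⟫ = ((‖⟪x, v⟫‖ ^ 2 : ℝ) : ℂ) := by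
    rw [ketbra_apply, inner_smul_left, Complex.ofReal_pow, ← Complex.conj_mul']
  rw [this]
  simp only [RCLike.re_to_complex, Complex.ofReal_re, true_and]
  positivity

lemma isState_ketbra {x : H} (hx : ‖x‖ = 1) : IsState (ketbra x x) :=
  ⟨isTraceClass_ketbra x x, isPositive_ketbra x, by
    rw [trace_ketbra, inner_self_eq_norm_sq_to_K, hx]; simp⟩

/-- A positive form attains zero only on the kernel of the operator. -/
lemma apply_eq_zero_of_isPositive {T : H →L[ℂ] H} (hT : T.IsPositive) {v : H}
    (hv : ⟪v, T v⟫ = 0) : T v = 0 := by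
  by_contra hne
  have hn : 0 < ‖T v‖ ^ 2 := by positivity
  set M := (⟪T v, T (T v)⟫).re with hM
  have hM0 : 0 ≤ M := hT.re_inner_nonneg_right (T v)
  have key : ∀ s : ℝ, 0 ≤ -2 * s * ‖T v‖ ^ 2 + s ^ 2 * M := by
    intro s
    have h := hT.re_inner_nonneg_right (v - (s : ℂ) • T v)
    have e1 : ⟪v, T (T v)⟫ = ((‖T v‖ ^ 2 : ℝ) : ℂ) := by
      rw [← hT.inner_left_eq_inner_right, inner_self_eq_norm_sq_to_K]; simp
    have e2 : ⟪T v, T v⟫ = ((‖T v‖ ^ 2 : ℝ) : ℂ) := by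
      rw [inner_self_eq_norm_sq_to_K]; simp
    rw [map_sub, map_smul, inner_sub_left, inner_sub_right, inner_sub_right, inner_smul_left,
      inner_smul_left, inner_smul_right, inner_smul_right, hv, e1, e2] at h
    simp [-Complex.ofReal_pow] at h
    rw [← hM] at h
    nlinarith
  have h1 := key (‖T v‖ ^ 2 / (M + 1))
  have hpos : 0 < M + 1 := by linarith
  have h2 : -2 * (‖T v‖ ^ 2 / (M + 1)) * ‖T v‖ ^ 2 + (‖T v‖ ^ 2 / (M + 1)) ^ 2 * M
      = -((‖T v‖ ^ 2) ^ 2 * (M + 2)) / (M + 1) ^ 2 := by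
    field_simp
    ring
  rw [h2] at h1
  have h3 : -((‖T v‖ ^ 2) ^ 2 * (M + 2)) / (M + 1) ^ 2 < 0 := by
    apply div_neg_of_neg_of_pos
    · have : 0 < (‖T v‖ ^ 2) ^ 2 * (M + 2) := by positivity
      linarith
    · positivity
  linarith

/-- The trace of a positive trace-class operator is a nonnegative real, zero only for `0`. -/
lemma exists_trace_eq {P : H →L[ℂ] H} (hP : IsTraceClass P) (hpos : P.IsPositive) :
    ∃ r : ℝ, 0 ≤ r ∧ trace P = r ∧ (r = 0 → P = 0) := by
  obtain ⟨w, b, -⟩ := exists_hilbertBasis ℂ H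
  have h := hasSum_trace b hP
  have hre : HasSum (fun i => (⟪b i, P (b i)⟫).re) (trace P).re := Complex.hasSum_re h
  have hterm : ∀ i, ⟪b i, P (b i)⟫ = (((⟪b i, P (b i)⟫).re : ℝ) : ℂ) := fun i => by
    apply Complex.ext
    · simp
    · simpa using (Complex.nonneg_iff.1 (hpos.inner_nonneg_right (b i))).2.symm
  have hnn : ∀ i, 0 ≤ (⟪b i, P (b i)⟫).re := fun i => hpos.re_inner_nonneg_right (b i)
  refine ⟨(trace P).re, hre.nonneg hnn, ?_, fun h0 => ?_⟩
  · refine h.unique ?_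
    convert Complex.hasSum_ofReal.2 hre using 2 with i
    exact hterm i
  · rw [h0, hasSum_zero_iff_of_nonneg hnn] at hre
    have hb : ∀ i, P (b i) = 0 := fun i => apply_eq_zero_of_isPositive hpos (by
      rw [hterm i, congrFun hre i]; simp)
    ext v
    have := (b.hasSum_repr v).mapL P
    simp only [map_smul, hb, smul_zero] at this
    simpa using this.unique hasSum_zero

/-! ### Hilbert bases with small index types -/

/-- A separable Hilbert space, in any universe, has a Hilbert basis indexed by a subset of `ℕ`. -/
lemma exists_small_hilbertBasis (H : Type*) [NormedAddCommGroup H] [InnerProductSpace ℂ H]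
    [CompleteSpace H] [SeparableSpace H] : ∃ s : Set ℕ, Nonempty (HilbertBasis s ℂ H) := by
  obtain ⟨w, b, -⟩ := exists_hilbertBasis ℂ H
  -- balls of radius `1/2` around the vectors of an orthonormal family are disjoint
  have hw : Countable w := by
    refine Pairwise.countable_of_isOpen_disjoint (s := fun i : w => Metric.ball (b i) (1 / 2))
      ?_ (fun _ => Metric.isOpen_ball) (fun i => ⟨b i, Metric.mem_ball_self (by norm_num)⟩)
    intro i j hij
    refine Metric.ball_disjoint_ball ?_
    have h1 := b.orthonormal.1 i
    have h2 := b.orthonormal.1 j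
    have h3 : ⟪b i, b j⟫ = 0 := b.orthonormal.2 hij
    have h4 : ‖b i - b j‖ ^ 2 = 2 := by
      rw [@norm_sub_sq ℂ, h1, h2, h3]; norm_num
    rw [dist_eq_norm]
    nlinarith [norm_nonneg (b i - b j)]
  obtain ⟨f, hf⟩ := exists_injective_nat w
  let e : w ≃ Set.range f := Equiv.ofInjective f hf
  refine ⟨Set.range f, ⟨HilbertBasis.mk (v := fun i => b (e.symm i))
    (b.orthonormal.comp _ e.symm.injective) ?_⟩⟩
  have : Set.range (fun i => b (e.symm i)) = Set.range b := e.symm.surjective.range_comp b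
  rw [this, b.dense_span]

/-- A copy in `Type` of a separable Hilbert space living in an arbitrary universe. -/
lemma exists_small_copy (H : Type*) [NormedAddCommGroup H] [InnerProductSpace ℂ H]
    [CompleteSpace H] [SeparableSpace H] :
    ∃ H0 : SepHilbert, Nonempty (H ≃ₗᵢ[ℂ] H0.carrier) := by
  obtain ⟨s, ⟨b⟩⟩ := exists_small_hilbertBasis H
  have : SeparableSpace (lp (fun _ : s => ℂ) 2) :=
    b.repr.surjective.denseRange.separableSpace b.repr.continuous
  exact ⟨⟨lp (fun _ : s => ℂ) 2⟩, ⟨b.repr⟩⟩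

/-- The one-element Hilbert basis `1` of `ℂ`. -/
def unitBasis : HilbertBasis Unit ℂ ℂ :=
  (OrthonormalBasis.singleton Unit ℂ).toHilbertBasis

@[simp]
lemma unitBasis_apply (i : Unit) : unitBasis i = 1 := by
  simp [unitBasis]

/-! ### Hilbert tensor products -/

namespace TensorStruct

variable (ts : TensorStruct K H W)

lemma ext_inner {w w' : W} (h : ∀ x y, ⟪ts.t x y, w⟫ = ⟪ts.t x y, w'⟫) : w = w' := by
  rw [← sub_eq_zero]
  have hd : Dense (Submodule.span ℂ {w : W | ∃ x y, w = ts.t x y} : Set W) := by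
    rw [Submodule.dense_iff_topologicalClosure_eq_top]
    exact ts.dense_t
  refine hd.eq_zero_of_inner_right ℂ (x := w - w') ?_
  intro v hv
  induction hv using Submodule.span_induction with
  | mem v hv =>
    obtain ⟨x, y, rfl⟩ := hv
    simp [inner_sub_right, h]
  | zero => simp
  | add v v' _ _ h1 h2 => simp_all [inner_add_left]
  | smul c v _ h1 => simp_all [inner_smul_left]

/-- Bounded operators are determined by their values on elementary tensors. -/
lemma ext_clm {F : Type*} [NormedAddCommGroup F] [InnerProductSpace ℂ F] [CompleteSpace F]
    {L L' : W →L[ℂ] F} (h : ∀ x y, L (ts.t x y) = L' (ts.t x y)) : L = L' := by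
  have : adjoint L = adjoint L' := by
    ext f
    refine ts.ext_inner fun x y => ?_
    rw [adjoint_inner_right, adjoint_inner_right, h]
  exact adjoint.injective this

lemma norm_t (x : K) (y : H) : ‖ts.t x y‖ = ‖x‖ * ‖y‖ := by
  have h := ts.inner_t x x y y
  rw [inner_self_eq_norm_sq_to_K, inner_self_eq_norm_sq_to_K, inner_self_eq_norm_sq_to_K] at h
  have hsq : ‖ts.t x y‖ ^ 2 = (‖x‖ * ‖y‖) ^ 2 := by
    rw [mul_pow]; exact_mod_cast h
  exact (pow_left_inj₀ (norm_nonneg _) (by positivity) two_ne_zero).1 hsq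

/-- The bounded operator `y ↦ x ⊗ y`. -/
def left (x : K) : H →L[ℂ] W :=
  LinearMap.mkContinuous
    { toFun := fun y => ts.t x y
      map_add' := fun y y' => ts.ext_inner fun u v => by
        simp only [inner_add_right, ts.inner_t]; ring
      map_smul' := fun c y => ts.ext_inner fun u v => by
        simp only [inner_smul_right, ts.inner_t, RingHom.id_apply]; ring } ‖x‖
    fun y => (ts.norm_t x y).le

/-- The bounded operator `x ↦ x ⊗ y`. -/
def right (y : H) : K →L[ℂ] W :=
  LinearMap.mkContinuous
    { toFun := fun x => ts.t x y
      map_add' := fun x x' => ts.ext_inner fun u v => by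
        simp only [inner_add_right, ts.inner_t]; ring
      map_smul' := fun c x => ts.ext_inner fun u v => by
        simp only [inner_smul_right, ts.inner_t, RingHom.id_apply]; ring } ‖y‖
    fun x => (ts.norm_t x y).le.trans (mul_comm _ _).le

@[simp] lemma left_apply (x : K) (y : H) : ts.left x y = ts.t x y := rfl

@[simp] lemma right_apply (x : K) (y : H) : ts.right y x = ts.t x y := rfl

lemma adjoint_left_t (u x : K) (y : H) : adjoint (ts.left u) (ts.t x y) = ⟪u, x⟫ • y := by
  refine ext_inner_left ℂ fun v => ?_
  rw [adjoint_inner_right, left_apply, ts.inner_t, inner_smul_right]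

lemma adjoint_right_t (v : H) (x : K) (y : H) : adjoint (ts.right v) (ts.t x y) = ⟪v, y⟫ • x := by
  refine ext_inner_left ℂ fun u => ?_
  rw [adjoint_inner_right, right_apply, ts.inner_t, inner_smul_right, mul_comm]

end TensorStruct

/-- `H2 ⊗ ℂ` realized on an isometric copy of `H2`. -/
def tensorUnitRight (U : H2 ≃ₗᵢ[ℂ] W) : TensorStruct H2 ℂ W where
  t x c := c • U x
  inner_t x x' c c' := by
    simp; ring
  dense_t := by
    rw [eq_top_iff]
    intro w _
    exact Submodule.le_topologicalClosure _ (Submodule.subset_span ⟨U.symm w, 1, by simp⟩)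

/-- `ℂ ⊗ W` realized on `W`. -/
def tensorUnitLeft (W : Type*) [NormedAddCommGroup W] [InnerProductSpace ℂ W] :
    TensorStruct ℂ W W where
  t c y := c • y
  inner_t c c' y y' := by
    simp; ring
  dense_t := by
    rw [eq_top_iff]
    intro w _
    exact Submodule.le_topologicalClosure _ (Submodule.subset_span ⟨1, w, by simp⟩)

/-- `ℂ² ⊗ H` realized on `W ⊕ W` for an isometric copy `W` of `H`. -/
def tensorQubit (U : H ≃ₗᵢ[ℂ] W) :
    TensorStruct (EuclideanSpace ℂ (Fin 2)) H (PiLp 2 fun _ : Fin 2 => W) where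
  t x y := WithLp.toLp 2 fun i => x i • U y
  inner_t x x' y y' := by
    simp [PiLp.inner_apply, inner_smul_left, inner_smul_right]; ring
  dense_t := by
    rw [eq_top_iff]
    intro w _
    refine Submodule.le_topologicalClosure _ ?_
    have e : w = WithLp.toLp 2 (fun i => (EuclideanSpace.single (0 : Fin 2) (1 : ℂ)) i •
          U (U.symm (w 0)))
        + WithLp.toLp 2 (fun i => (EuclideanSpace.single (1 : Fin 2) (1 : ℂ)) i •
          U (U.symm (w 1))) := by
      ext i
      fin_cases i <;> simp
    rw [e]
    exact Submodule.add_mem _ (Submodule.subset_span ⟨_, _, rfl⟩)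
      (Submodule.subset_span ⟨_, _, rfl⟩)

instance {W : Type*} [NormedAddCommGroup W] [SeparableSpace W] :
    SeparableSpace (PiLp 2 fun _ : Fin 2 => W) :=
  (WithLp.toLp_surjective 2).denseRange.separableSpace (PiLp.continuous_toLp 2 _)

/-! ### Complements of a conjugation -/

lemma hasSum_of_eq {ι M : Type*} [AddCommMonoid M] [TopologicalSpace M] {f g : ι → M} {a b : M}
    (h : HasSum g b) (hf : ∀ i, f i = g i) (ha : a = b) : HasSum f a := by
  rw [ha, funext hf]
  exact h

/-- A dilation `B` of the conjugation `T ↦ G T G*` through a tensor product `H2 ⊗ H3` is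
`x ↦ G x ⊗ k` for a single vector `k`. Writing `S_u` for the slice map `(left u)*`, the partial
trace of `B |x'⟩⟨x| B*` gives `⟪S_{u'} B x, S_u B x'⟫ = ⟪u, G x'⟫ ⟪G x, u'⟫`; hence
`S_u B x - ⟪u, G x⟫ k` has norm zero for `k = S_{u₀} B x₀` as soon as `⟪u₀, G x₀⟫ = 1`. -/
lemma exists_eq_tensor_of_partialTrace (G : H1 →L[ℂ] H2) (ts : TensorStruct H2 H3 W)
    (B : H1 →L[ℂ] W)
    (h : ∀ T, IsTraceClass T →
      IsPartialTraceRight ts (B ∘L T ∘L adjoint B) (G ∘L T ∘L adjoint G)) :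
    ∃ k : H3, ∀ x, B x = ts.t (G x) k := by
  have polar : ∀ (u u' : H2) (x x' : H1),
      ⟪adjoint (ts.left u') (B x), adjoint (ts.left u) (B x')⟫ = ⟪u, G x'⟫ * ⟪G x, u'⟫ := by
    intro u u' x x'
    obtain ⟨ι, _, b, hb⟩ := h (ketbra x' x) (isTraceClass_ketbra _ _)
    have h1 := hb u u'
    rw [comp_ketbra_comp_adjoint, comp_ketbra_comp_adjoint] at h1
    simp only [ketbra_apply, inner_smul_right] at h1
    rw [mul_comm ⟪u, G x'⟫]
    refine HasSum.unique ?_ h1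
    have h2 := b.hasSum_inner_mul_inner (adjoint (ts.left u') (B x)) (adjoint (ts.left u) (B x'))
    simpa only [adjoint_inner_left, adjoint_inner_right, TensorStruct.left_apply] using h2
  by_cases hG : ∃ x, G x ≠ 0
  · obtain ⟨x0, hx0⟩ := hG
    set u0 : H2 := ((‖G x0‖ ^ 2 : ℝ) : ℂ)⁻¹ • G x0 with hu0
    have hn : ((‖G x0‖ ^ 2 : ℝ) : ℂ) ≠ 0 := by
      simpa using hx0
    have e0 : ⟪G x0, G x0⟫ = ((‖G x0‖ ^ 2 : ℝ) : ℂ) := by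
      rw [inner_self_eq_norm_sq_to_K]; simp
    have e1 : ⟪G x0, u0⟫ = 1 := by
      rw [hu0, inner_smul_right, e0, inv_mul_cancel₀ hn]
    have e2 : ⟪u0, G x0⟫ = 1 := by
      rw [← inner_conj_symm, e1, map_one]
    refine ⟨adjoint (ts.left u0) (B x0), fun x => ts.ext_inner fun u y => ?_⟩
    have hz : adjoint (ts.left u) (B x) - ⟪u, G x⟫ • adjoint (ts.left u0) (B x0) = 0 := by
      rw [← inner_self_eq_zero (𝕜 := ℂ), inner_sub_left, inner_sub_right, inner_sub_right,
        inner_smul_left, inner_smul_left, inner_smul_right, inner_smul_right, polar, polar,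
        polar, polar, e1, e2, inner_conj_symm]
      ring
    rw [ts.inner_t, ← ts.left_apply u y, ← adjoint_inner_right, sub_eq_zero.1 hz,
      inner_smul_right]
  · push Not at hG
    refine ⟨0, fun x => ts.ext_inner fun u y => ?_⟩
    have hz : adjoint (ts.left u) (B x) = 0 := by
      rw [← inner_self_eq_zero (𝕜 := ℂ), polar, hG]
      simp
    rw [ts.inner_t, ← ts.left_apply u y, ← adjoint_inner_right, hz]
    simp

/-- Every complement of `T ↦ G T G*` has the form `T ↦ tr(G T G*) |k⟩⟨k|`. -/
lemma complement_of_conj (G : H1 →L[ℂ] H2) {Φ : (H1 →L[ℂ] H1) → (H2 →L[ℂ] H2)}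
    (hΦ : ∀ T, IsTraceClass T → Φ T = G ∘L T ∘L adjoint G)
    {Ψ : (H1 →L[ℂ] H1) → (H3 →L[ℂ] H3)} (h : IsComplementary Ψ Φ) :
    ∃ k : H3, ∀ T, IsTraceClass T → Ψ T = trace (G ∘L T ∘L adjoint G) • ketbra k k := by
  obtain ⟨W, ts, B, hB⟩ := h
  obtain ⟨k, hk⟩ := exists_eq_tensor_of_partialTrace G ts B fun T hT => hΦ T hT ▸ (hB T hT).1
  have hadj : ∀ u y, adjoint B (ts.t u y) = ⟪k, y⟫ • adjoint G u := by
    intro u y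
    refine ext_inner_left ℂ fun v => ?_
    rw [adjoint_inner_right, hk, ts.inner_t, inner_smul_right, adjoint_inner_right, mul_comm]
  refine ⟨k, fun T hT => ?_⟩
  obtain ⟨ι, _, b, hb⟩ := (hB T hT).2
  ext y
  refine ext_inner_left ℂ fun x => ?_
  refine (hb x y).unique ?_
  have h1 := (hasSum_trace b (hT.conj G (adjoint G))).mul_right (⟪x, k⟫ * ⟪k, y⟫)
  refine hasSum_of_eq h1 (fun i => ?_) ?_
  · simp only [comp_apply]
    rw [← adjoint_inner_left, hadj, hadj, ← adjoint_inner_left G, map_smul, inner_smul_left,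
      inner_smul_right, inner_conj_symm]
    ring
  · rw [smul_apply, ketbra_apply, inner_smul_right, inner_smul_right]
    ring

/-- `T ↦ tr(G T G*) |k⟩⟨k|` is a quantum operation, with Kraus operators `|k⟩⟨G* b_i|` for a
Hilbert basis `b` of `H2`. -/
lemma isQuantumOperation_trace_ketbra [SeparableSpace H2] (G : H1 →L[ℂ] H2) (k : H3) :
    IsQuantumOperation fun T : H1 →L[ℂ] H1 =>
      trace (G ∘L T ∘L adjoint G) • ketbra k k := by
  obtain ⟨s, ⟨b⟩⟩ := exists_small_hilbertBasis H2
  refine ⟨s, inferInstance, fun i => ketbra k (adjoint G (b i)),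
    ⟪k, k⟫ • (adjoint G ∘L G), fun x => ?_, fun T hT => ?_⟩
  · have h := ((b.hasSum_repr (G x)).mapL (adjoint G)).const_smul ⟪k, k⟫
    simp only [map_smul, b.repr_apply_apply] at h
    simpa [adjoint_ketbra, adjoint_inner_left, smul_smul, mul_comm] using h
  · have h := (hasSum_trace b (hT.conj G (adjoint G))).smul_const (ketbra k k)
    refine hasSum_of_eq h (fun i => ?_) rfl
    ext v
    simp [adjoint_ketbra, adjoint_inner_left, smul_smul, mul_comm]

lemma isQuantumOperation_conj (G : H1 →L[ℂ] H2) :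
    IsQuantumOperation fun T : H1 →L[ℂ] H1 => G ∘L T ∘L adjoint G :=
  ⟨Unit, inferInstance, fun _ => G, adjoint G ∘L G, fun x =>
    hasSum_unique fun _ : Unit => adjoint G (G x), fun T _ =>
    hasSum_unique fun _ : Unit => G ∘L T ∘L adjoint G⟩

/-- A conjugation is degradable: its complement only sees the trace of its output. -/
lemma degradable_of_conj [SeparableSpace H2] (G : H1 →L[ℂ] H2)
    {Φ : (H1 →L[ℂ] H1) → (H2 →L[ℂ] H2)}
    (hΦ : ∀ T, IsTraceClass T → Φ T = G ∘L T ∘L adjoint G) : Degradable Φ := by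
  intro K Ψ _ hc
  obtain ⟨k, hk⟩ := complement_of_conj G hΦ hc
  refine ⟨_, isQuantumOperation_trace_ketbra (ContinuousLinearMap.id ℂ H2) k, fun T hT => ?_⟩
  have : adjoint (ContinuousLinearMap.id ℂ H2) = ContinuousLinearMap.id ℂ H2 := by
    symm
    rw [eq_adjoint_iff]
    simp
  rw [hk T hT, hΦ T hT, this, comp_id, id_comp]

/-- `T ↦ tr(G T G*)` is complementary to `T ↦ G T G*`, by way of the dilation `H2 ≅ H2 ⊗ ℂ`. -/
lemma isComplementary_trace_conj [SeparableSpace H2] (G : H1 →L[ℂ] H2) :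
    IsComplementary (fun T => trace (G ∘L T ∘L adjoint G) • (1 : ℂ →L[ℂ] ℂ))
      (fun T => G ∘L T ∘L adjoint G) := by
  obtain ⟨H0, ⟨U⟩⟩ := exists_small_copy H2
  obtain ⟨s, ⟨b⟩⟩ := exists_small_hilbertBasis H2
  set B : H1 →L[ℂ] H0.carrier := (U : H2 →L[ℂ] H0.carrier) ∘L G with hB
  have hadj : ∀ (c : ℂ) y, adjoint B (c • U y) = c • adjoint G y := by
    intro c y
    refine ext_inner_left ℂ fun v => ?_
    simp [adjoint_inner_right, hB, inner_smul_right]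
  refine ⟨H0, tensorUnitRight U, B, fun T hT =>
    ⟨⟨Unit, inferInstance, unitBasis, fun x y => ?_⟩, ⟨s, inferInstance, b, fun x y => ?_⟩⟩⟩
  · refine hasSum_of_eq (hasSum_unique _) (fun _ => rfl) ?_
    simp only [tensorUnitRight, unitBasis_apply, comp_apply]
    rw [← adjoint_inner_left B, hadj, hadj, ← adjoint_inner_left G]
    simp
  · have h1 := (hasSum_trace b (hT.conj G (adjoint G))).mul_right (⟪x, y⟫ : ℂ)
    refine hasSum_of_eq h1 (fun i => ?_) ?_
    · simp only [tensorUnitRight, comp_apply]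
      rw [← adjoint_inner_left B, hadj, hadj, ← adjoint_inner_left G, map_smul, inner_smul_left,
        inner_smul_right]
      simp
      ring
    · simp
      ring

/-- The mirror image of `isComplementary_trace_conj`, by way of `H0 ≅ ℂ ⊗ H0`. -/
lemma isComplementary_conj_trace {H0 : SepHilbert} (G : H1 →L[ℂ] H0.carrier) :
    IsComplementary (fun T => G ∘L T ∘L adjoint G)
      (fun T => trace (G ∘L T ∘L adjoint G) • (1 : ℂ →L[ℂ] ℂ)) := by
  obtain ⟨s, ⟨b⟩⟩ := exists_small_hilbertBasis H0.carrier
  refine ⟨H0, tensorUnitLeft H0.carrier, G, fun T hT =>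
    ⟨⟨s, inferInstance, b, fun x y => ?_⟩, ⟨Unit, inferInstance, unitBasis, fun x y => ?_⟩⟩⟩
  · have h1 := (hasSum_trace b (hT.conj G (adjoint G))).mul_right (⟪x, y⟫ : ℂ)
    refine hasSum_of_eq h1 (fun i => ?_) ?_
    · simp only [tensorUnitLeft, map_smul, inner_smul_left, inner_smul_right]
      simp
      ring
    · simp
      ring
  · refine hasSum_of_eq (hasSum_unique _) (fun _ => rfl) ?_
    simp [tensorUnitLeft]

/-! ### Operators of rank at most one -/

/-- `A` has rank at most one once the range of `A*` lies in a line. -/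
lemma exists_ketbra_of_adjoint_mem_span (A : H →L[ℂ] H) (b : H)
    (h : ∀ x, ∃ c : ℂ, adjoint A x = c • b) : ∃ x y : H, A = ketbra x y := by
  by_cases hb : b = 0
  · refine ⟨0, 0, ?_⟩
    ext y
    refine ext_inner_left ℂ fun x => ?_
    obtain ⟨c, hc⟩ := h x
    rw [← adjoint_inner_left, hc, hb]
    simp
  · have hn : (⟪b, b⟫ : ℂ) ≠ 0 := by simpa using hb
    refine ⟨(⟪b, b⟫ : ℂ)⁻¹ • A b, b, ?_⟩
    ext y
    refine ext_inner_left ℂ fun x => ?_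
    obtain ⟨c, hc⟩ := h x
    rw [ketbra_apply, inner_smul_right, inner_smul_right, ← adjoint_inner_left,
      ← adjoint_inner_left, hc, inner_smul_left, inner_smul_left]
    field_simp

/-- Testing on `T = |x⟩⟨x|` shows that the operators `|A* x⟩⟨A* x|` are all multiples of `R`,
so these vectors span at most a line. -/
lemma exists_ketbra_of_forall_smul (A R : H →L[ℂ] H)
    (h : ∀ T, IsTraceClass T → ∃ c : ℂ, adjoint A ∘L T ∘L A = c • R) :
    ∃ x y : H, A = ketbra x y := by
  have hk : ∀ x, ∃ c : ℂ, ketbra (adjoint A x) (adjoint A x) = c • R := by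
    intro x
    obtain ⟨c, hc⟩ := h _ (isTraceClass_ketbra x x)
    refine ⟨c, ?_⟩
    rw [← hc, ← comp_ketbra_comp_adjoint, adjoint_adjoint]
  by_cases hA : ∃ x, adjoint A x ≠ 0
  · obtain ⟨x0, hx0⟩ := hA
    obtain ⟨c0, hc0⟩ := hk x0
    have hc0' : c0 ≠ 0 := by
      rintro rfl
      have := congrArg (fun F => F (adjoint A x0)) hc0
      simp [hx0] at this
    have hR : R = c0⁻¹ • ketbra (adjoint A x0) (adjoint A x0) := by
      rw [hc0, smul_smul, inv_mul_cancel₀ hc0', one_smul]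
    refine exists_ketbra_of_adjoint_mem_span A (adjoint A x0) fun x => ?_
    obtain ⟨c, hc⟩ := hk x
    by_cases hx : adjoint A x = 0
    · exact ⟨0, by simp [hx]⟩
    have h1 := congrArg (fun F => F (adjoint A x)) hc
    have hn : (⟪adjoint A x, adjoint A x⟫ : ℂ) ≠ 0 := by simpa using hx
    simp only [hR, ketbra_apply, smul_apply, smul_smul] at h1
    refine ⟨(⟪adjoint A x, adjoint A x⟫ : ℂ)⁻¹ * (c * c0⁻¹ * ⟪adjoint A x0, adjoint A x⟫), ?_⟩
    rw [mul_smul, ← h1, smul_smul, inv_mul_cancel₀ hn, one_smul]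
  · push Not at hA
    exact exists_ketbra_of_adjoint_mem_span A 0 fun x => ⟨0, by simp [hA]⟩

lemma ketbra_conj (a b : H) (T : H →L[ℂ] H) :
    adjoint (ketbra a b) ∘L T ∘L ketbra a b = ⟪a, T a⟫ • ketbra b b := by
  ext v
  simp [adjoint_ketbra, smul_smul, mul_comm]

/-! ### Anti-degradability -/

lemma antiDegradable_of_ketbra (a b : H) {Φ : (H →L[ℂ] H) → (H →L[ℂ] H)}
    (hΦ : ∀ T, Φ T = adjoint (ketbra a b) ∘L T ∘L ketbra a b) : AntiDegradable Φ := by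
  intro K Ψ _ hc
  obtain ⟨k, hk⟩ := complement_of_conj (adjoint (ketbra a b))
    (fun T _ => by rw [hΦ, adjoint_adjoint]) hc
  -- `Ψ` is again a conjugation, by the rank-one operator `‖b‖ |k⟩⟨a|`
  refine degradable_of_conj (ketbra ((‖b‖ : ℂ) • k) a) fun T hT => ?_
  rw [hk T hT, adjoint_adjoint, ketbra_conj, trace_smul (isTraceClass_ketbra b b), trace_ketbra,
    inner_self_eq_norm_sq_to_K]
  ext v
  simp only [adjoint_ketbra, comp_apply, ketbra_apply, smul_apply, smul_smul, map_smul,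
    inner_smul_left, Complex.conj_ofReal, RCLike.ofReal_eq_complex_ofReal]
  congr 1
  ring

lemma trace_conj_isometryEquiv (U : H1 ≃ₗᵢ[ℂ] H2) {X : H1 →L[ℂ] H1} (hX : IsTraceClass X) :
    trace ((U : H1 →L[ℂ] H2) ∘L X ∘L adjoint (U : H1 →L[ℂ] H2)) = trace X := by
  obtain ⟨w, b, -⟩ := exists_hilbertBasis ℂ H1
  set b' : HilbertBasis w ℂ H2 := HilbertBasis.ofRepr (U.symm.trans b.repr) with hb'
  have hb : ∀ i, b' i = U (b i) := by
    classical
    intro i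
    rw [← b'.repr_symm_single, ← b.repr_symm_single]
    rfl
  have hadj : ∀ x, adjoint (U : H1 →L[ℂ] H2) (U x) = x := by
    intro x
    refine ext_inner_left ℂ fun v => ?_
    rw [adjoint_inner_right]
    exact U.inner_map_map v x
  refine (hasSum_trace b' (hX.conj _ _)).unique ?_
  refine hasSum_of_eq (hasSum_trace b hX) (fun i => ?_) rfl
  rw [hb, comp_apply, comp_apply, hadj]
  exact U.inner_map_map _ _

/-- The trace map `Ψ(T) = tr(A* T A)` into `T(ℂ)` is a complement of `Φ`, and `Φ` itself, carried to
a copy of `H`, is a complement of `Ψ`. So degradability of `Ψ` factors `Φ` through `ℂ`: all its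
values are multiples of one operator. -/
lemma exists_ketbra_of_antiDegradable [SeparableSpace H] (A : H →L[ℂ] H)
    {Φ : (H →L[ℂ] H) → (H →L[ℂ] H)} (hΦ : ∀ T, Φ T = adjoint A ∘L T ∘L A)
    (h : AntiDegradable Φ) : ∃ x y : H, A = ketbra x y := by
  obtain ⟨H0, ⟨U⟩⟩ := exists_small_copy H
  have hΦ' : Φ = fun T => adjoint A ∘L T ∘L adjoint (adjoint A) := by
    ext1 T
    rw [hΦ, adjoint_adjoint]
  have hone : (1 : ℂ →L[ℂ] ℂ) = ketbra 1 1 := by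
    ext
    simp
  set V : H →L[ℂ] H0.carrier := (U : H →L[ℂ] H0.carrier) with hV
  have hVV : ∀ x, adjoint V (V x) = x := by
    intro x
    refine ext_inner_left ℂ fun v => ?_
    rw [adjoint_inner_right]
    exact U.inner_map_map v x
  set Ψ : (H →L[ℂ] H) → (ℂ →L[ℂ] ℂ) := fun T =>
    trace (adjoint A ∘L T ∘L adjoint (adjoint A)) • (1 : ℂ →L[ℂ] ℂ) with hΨ
  have h1 : IsComplementary Ψ Φ := by
    rw [hΦ']
    exact isComplementary_trace_conj (adjoint A)
  have hq : IsQuantumOperation Ψ := by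
    rw [hΨ, hone]
    exact isQuantumOperation_trace_ketbra _ _
  set C : H →L[ℂ] H0.carrier := V ∘L adjoint A with hC
  have hCeq : ∀ T, C ∘L T ∘L adjoint C = V ∘L (adjoint A ∘L T ∘L A) ∘L adjoint V := by
    intro T
    ext v
    simp [hC, adjoint_comp]
  have h2 : IsComplementary (fun T => C ∘L T ∘L adjoint C) Ψ := by
    obtain ⟨W, ts, B, hB⟩ := isComplementary_conj_trace C
    refine ⟨W, ts, B, fun T hT => ⟨?_, (hB T hT).2⟩⟩
    have e : Ψ T = trace (C ∘L T ∘L adjoint C) • (1 : ℂ →L[ℂ] ℂ) := by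
      rw [hCeq, trace_conj_isometryEquiv U (hT.conj _ _), hΨ, adjoint_adjoint]
    rw [e]
    exact (hB T hT).1
  obtain ⟨Γ, ⟨ι, _, D, S, -, hD⟩, hΓ⟩ := h ⟨ℂ⟩ Ψ hq h1 H0 _ (isQuantumOperation_conj C) h2
  have htc : IsTraceClass (1 : ℂ →L[ℂ] ℂ) := hone ▸ isTraceClass_ketbra _ _
  -- linearity of `Γ` on multiples of the identity of `ℂ`
  have hlin : ∀ c : ℂ, Γ (c • (1 : ℂ →L[ℂ] ℂ)) = c • Γ 1 := by
    intro c
    refine (hD _ (htc.smul c)).unique ?_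
    refine hasSum_of_eq ((hD _ htc).const_smul c) (fun i => ?_) rfl
    ext v
    simp
  refine exists_ketbra_of_forall_smul A (adjoint V ∘L Γ 1 ∘L V) fun T hT =>
    ⟨trace (adjoint A ∘L T ∘L adjoint (adjoint A)), ?_⟩
  have h3 := hΓ T hT
  rw [hCeq, hΨ, hlin] at h3
  ext v
  have h4 := congrArg (fun F => adjoint V (F (V v))) h3
  simp only [comp_apply, smul_apply, map_smul, hVV] at h4
  simp only [comp_apply, smul_apply]
  exact h4.symm

/-! ### Strong entanglement breaking for rank-one conjugations -/

/-- Any two Kraus decompositions of a conjugation agree up to scalars: if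
`Σ_j D_j T D_j* = G T G*` with `G ≠ 0` then `D_j = c_j G` with `Σ_j |c_j|² = 1`. -/
lemma kraus_of_conj {ι : Type*} (G : H1 →L[ℂ] H2) (D : ι → H1 →L[ℂ] H2)
    (h : ∀ T, IsTraceClass T → HasSum (fun j => D j ∘L T ∘L adjoint (D j)) (G ∘L T ∘L adjoint G)) :
    (G = 0 ∧ ∀ j, D j = 0) ∨
      ∃ c : ι → ℂ, (∀ j, D j = c j • G) ∧ HasSum (fun j => c j * starRingEnd ℂ (c j)) 1 := by
  have polar : ∀ (u u' : H2) (x x' : H1),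
      HasSum (fun j => ⟪u, D j x⟫ * ⟪D j x', u'⟫) (⟪u, G x⟫ * ⟪G x', u'⟫) := by
    intro u u' x x'
    have h1 := (h (ketbra x x') (isTraceClass_ketbra _ _)).mapL
      ((innerSL ℂ u) ∘L (ContinuousLinearMap.apply ℂ H2 u'))
    simp only [comp_ketbra_comp_adjoint] at h1
    simpa [inner_smul_right, mul_comm] using h1
  have zero_of : ∀ z : ι → ℂ, HasSum (fun j => z j * starRingEnd ℂ (z j)) 0 → ∀ j, z j = 0 := by
    intro z hz j
    have h1 := Complex.hasSum_re hz
    have e : ∀ j, (z j * starRingEnd ℂ (z j)).re = ‖z j‖ ^ 2 := by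
      intro j
      rw [Complex.mul_conj, Complex.normSq_eq_norm_sq, Complex.ofReal_re]
    simp only [e, Complex.zero_re] at h1
    rw [hasSum_zero_iff_of_nonneg fun j => by positivity] at h1
    simpa using congrFun h1 j
  by_cases hG : ∃ x, G x ≠ 0
  · right
    obtain ⟨x0, hx0⟩ := hG
    have hn : (⟪G x0, G x0⟫ : ℂ) ≠ 0 := by simpa using hx0
    set u0 : H2 := (⟪G x0, G x0⟫ : ℂ)⁻¹ • G x0 with hu0
    have e1 : ⟪G x0, u0⟫ = 1 := by
      rw [hu0, inner_smul_right, inv_mul_cancel₀ hn]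
    have e2 : ⟪u0, G x0⟫ = 1 := by
      rw [← inner_conj_symm, e1, map_one]
    refine ⟨fun j => ⟪u0, D j x0⟫, fun j => ?_, ?_⟩
    · ext x
      refine ext_inner_left ℂ fun u => ?_
      rw [smul_apply, inner_smul_right, ← sub_eq_zero]
      refine zero_of (fun j => ⟪u, D j x⟫ - ⟪u0, D j x0⟫ * ⟪u, G x⟫) ?_ j
      have hs := (((polar u u x x).sub ((polar u u0 x x0).mul_left ⟪G x, u⟫)).sub
        ((polar u0 u x0 x).mul_left ⟪u, G x⟫)).add
        ((polar u0 u0 x0 x0).mul_left (⟪u, G x⟫ * ⟪G x, u⟫))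
      refine hasSum_of_eq hs (fun j => ?_) ?_
      · simp only [map_sub, map_mul, inner_conj_symm]
        ring
      · rw [e1, e2]
        ring
    · refine hasSum_of_eq (polar u0 u0 x0 x0) (fun j => ?_) (by rw [e1, e2, mul_one])
      rw [inner_conj_symm]
  · left
    push Not at hG
    refine ⟨by ext x; simp [hG], fun j => ?_⟩
    ext x
    refine ext_inner_left ℂ fun u => ?_
    rw [zero_apply, inner_zero_right]
    refine zero_of (fun j => ⟪u, D j x⟫) ?_ j
    refine hasSum_of_eq (polar u u x x) (fun j => ?_) (by simp [hG])
    rw [inner_conj_symm]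

/-- `P ⊗ |e⟩⟨e|` is separable, for `P` positive trace-class and `e` a unit vector. -/
lemma cdSeparable_of_product (ts : TensorStruct K H W) {k e : _} (hk : ‖(k : K)‖ = 1)
    (he : ‖(e : H)‖ = 1) {P : K →L[ℂ] K} (hP : IsTraceClass P) (hpos : P.IsPositive) :
    CDSeparable ts (ts.right e ∘L P ∘L adjoint (ts.right e)) := by
  have hprod : ∀ Q : K →L[ℂ] K,
      IsProductOp ts Q (ketbra e e) (ts.right e ∘L Q ∘L adjoint (ts.right e)) := by
    intro Q x x' y y'
    simp only [comp_apply]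
    rw [← adjoint_inner_left, ts.adjoint_right_t, ts.adjoint_right_t, map_smul, inner_smul_left,
      inner_smul_right, inner_conj_symm, ketbra_apply, inner_smul_right]
    ring
  obtain ⟨r, hr0, hr, hrP⟩ := exists_trace_eq hP hpos
  by_cases h0 : r = 0
  · refine ⟨fun _ => 0, fun _ => ketbra k k, fun _ => ketbra e e, _, fun _ => le_rfl,
      summable_zero, fun _ => isState_ketbra hk, fun _ => isState_ketbra he,
      fun _ => hprod (ketbra k k), ?_⟩
    simp [hrP h0]
  · have hrc : (r : ℂ) ≠ 0 := by exact_mod_cast h0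
    refine ⟨fun n => if n = 0 then r else 0, fun _ => (r : ℂ)⁻¹ • P, fun _ => ketbra e e,
      fun _ => ts.right e ∘L ((r : ℂ)⁻¹ • P) ∘L adjoint (ts.right e), fun n => ?_,
      (hasSum_ite_eq 0 r).summable, fun _ => ⟨hP.smul _, ?_, ?_⟩, fun _ => isState_ketbra he,
      fun _ => hprod _, ?_⟩
    · dsimp only
      split_ifs
      · exact hr0
      · exact le_rfl
    · refine hpos.smul_of_nonneg ?_
      rw [← Complex.ofReal_inv]
      exact_mod_cast inv_nonneg.2 hr0
    · rw [trace_smul hP, hr, inv_mul_cancel₀ hrc]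
    · refine hasSum_of_eq (hasSum_ite_eq (0 : ℕ) (ts.right e ∘L P ∘L adjoint (ts.right e)))
        (fun n => ?_) rfl
      by_cases hn : n = 0
      · ext v
        simp [hn, smul_smul, hrc]
      · simp [hn]

lemma exists_unit_of_ne_zero {x : H} (hx : x ≠ 0) : ∃ e : H, ‖e‖ = 1 :=
  ⟨((‖x‖⁻¹ : ℝ) : ℂ) • x, by
    rw [norm_smul, Complex.norm_real, norm_inv, norm_norm, inv_mul_cancel₀ (norm_ne_zero_iff.2 hx)]⟩

/-- The output of `id ⊗ Φ` is `L ρ L*` with `L = I ⊗ A*`; for `A = |a⟩⟨b|` it is supported on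
`K ⊗ b`, hence a single product operator. -/
lemma isSEB_of_ketbra (a b : H) {Φ : (H →L[ℂ] H) → (H →L[ℂ] H)}
    (hΦ : ∀ T, Φ T = adjoint (ketbra a b) ∘L T ∘L ketbra a b) : IsSEB Φ := by
  rintro K W W' ts ts' ρ σ hρ ⟨ι, _, D, S, -, hD, L, hL, hσ⟩
  -- a state on `K ⊗ H` forces both factors to be nonzero
  obtain ⟨x, y, hxy⟩ : ∃ x y, ts.t x y ≠ 0 := by
    by_contra hcon
    push Not at hcon
    have hρ0 : ρ = 0 := ts.ext_clm fun x y => by rw [hcon, map_zero, map_zero]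
    have htr := hρ.2.2
    rw [hρ0] at htr
    simp [trace] at htr
  have hx : x ≠ 0 := by
    rintro rfl
    exact hxy (by rw [← norm_eq_zero, ts.norm_t]; simp)
  have hy : y ≠ 0 := by
    rintro rfl
    exact hxy (by rw [← norm_eq_zero, ts.norm_t]; simp)
  obtain ⟨k, hk⟩ := exists_unit_of_ne_zero hx
  rcases kraus_of_conj (adjoint (ketbra a b)) D
    (fun T hT => by simpa only [hΦ, adjoint_adjoint] using hD T hT) with ⟨-, hD0⟩ | ⟨c, hc, hsum⟩
  · obtain ⟨e, he⟩ := exists_unit_of_ne_zero hy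
    have hL0 : ∀ j, L j = 0 := fun j => ts.ext_clm fun x y => by
      rw [hL, hD0, zero_apply, zero_apply, ← norm_eq_zero, ts'.norm_t]; simp
    have hσ0 : σ = ts'.right e ∘L (0 : K.carrier →L[ℂ] K.carrier) ∘L adjoint (ts'.right e) := by
      refine hσ.unique ?_
      simp [hL0]
    rw [hσ0]
    refine cdSeparable_of_product ts' hk he ⟨fun _ => 0, fun _ => 0, ?_, ?_⟩ isPositive_zero
    · simp
    · simp
  · obtain ⟨j0, hj0⟩ : ∃ j, c j ≠ 0 := by
      by_contra hcon
      push Not at hcon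
      simp only [hcon, zero_mul] at hsum
      exact one_ne_zero (hsum.unique hasSum_zero)
    set M : W.carrier →L[ℂ] W'.carrier := (c j0)⁻¹ • L j0 with hM
    have hMt : ∀ x y, M (ts.t x y) = ⟪a, y⟫ • ts'.t x b := by
      intro x y
      rw [hM, smul_apply, hL, hc, ← ts'.left_apply, smul_apply, map_smul, smul_smul,
        inv_mul_cancel₀ hj0, one_smul, adjoint_ketbra, ketbra_apply, map_smul, ts'.left_apply]
    have hLM : ∀ j, L j = c j • M := fun j => ts.ext_clm fun x y => by
      rw [smul_apply, hMt, hL, hc, ← ts'.left_apply, smul_apply, map_smul, adjoint_ketbra,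
        ketbra_apply, map_smul, ts'.left_apply]
    have hσM : σ = M ∘L ρ ∘L adjoint M := by
      refine hσ.unique (hasSum_of_eq (hsum.smul_const (M ∘L ρ ∘L adjoint M)) (fun j => ?_)
        (one_smul _ _).symm)
      have hadj : adjoint (c j • M) = starRingEnd ℂ (c j) • adjoint M := map_smulₛₗ adjoint _ _
      rw [hLM, hadj]
      ext v
      simp [smul_smul, mul_comm]
    obtain ⟨e, he, hb⟩ : ∃ e : H, ‖e‖ = 1 ∧ ⟪e, b⟫ • e = b := by
      by_cases hb : b = 0
      · obtain ⟨e, he⟩ := exists_unit_of_ne_zero hy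
        exact ⟨e, he, by simp [hb]⟩
      · have hnb : (‖b‖ : ℂ) ≠ 0 := by simpa using hb
        refine ⟨((‖b‖⁻¹ : ℝ) : ℂ) • b, ?_, ?_⟩
        · rw [norm_smul, Complex.norm_real, norm_inv, norm_norm,
            inv_mul_cancel₀ (norm_ne_zero_iff.2 hb)]
        · rw [inner_smul_left, inner_self_eq_norm_sq_to_K, smul_smul, Complex.conj_ofReal]
          simp only [RCLike.ofReal_eq_complex_ofReal, Complex.ofReal_inv]
          field_simp
          exact one_smul _ _
    have hMV : M = ts'.right e ∘L (adjoint (ts'.right e) ∘L M) := ts.ext_clm fun x y => by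
      rw [comp_apply, comp_apply, hMt, map_smul, map_smul, ts'.adjoint_right_t, map_smul,
        ts'.right_apply, ← ts'.left_apply x e, ← map_smul, hb, ts'.left_apply]
    set N := adjoint (ts'.right e) ∘L M with hN
    have hfin : σ = ts'.right e ∘L (N ∘L ρ ∘L adjoint N) ∘L adjoint (ts'.right e) := by
      rw [hσM, hMV, adjoint_comp]
      rfl
    rw [hfin]
    exact cdSeparable_of_product ts' hk he (hρ.1.conj _ _) (hρ.2.1.conj_adjoint N)

/-! ### Strongly entanglement breaking conjugations have rank at most one -/

/-- A positive operator killing the orthogonal complements of `a` and of `c` has its range in the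
intersection of the lines `ℂ a` and `ℂ c`, which `hind` says is `0`. -/
lemma eq_zero_of_kills {ρ : H →L[ℂ] H} (hρ : ρ.IsPositive) {a c : H}
    (hind : ∀ s t : ℂ, s • a = t • c → s • a = 0)
    (ha : ∀ y, ⟪y, a⟫ = 0 → ρ y = 0) (hc : ∀ y, ⟪y, c⟫ = 0 → ρ y = 0) : ρ = 0 := by
  have mem : ∀ d : H, (∀ y, ⟪y, d⟫ = 0 → ρ y = 0) → ∀ v, ∃ s : ℂ, ρ v = s • d := by
    intro d hd v
    have h1 : ρ v ∈ (ℂ ∙ d)ᗮᗮ := by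
      rw [Submodule.mem_orthogonal]
      intro y hy
      have : ⟪y, d⟫ = 0 := by
        rw [Submodule.mem_orthogonal_singleton_iff_inner_left] at hy
        exact hy
      rw [← hρ.inner_left_eq_inner_right, hd y this, inner_zero_left]
    rw [Submodule.orthogonal_orthogonal] at h1
    obtain ⟨s, hs⟩ := Submodule.mem_span_singleton.1 h1
    exact ⟨s, hs.symm⟩
  ext v
  obtain ⟨s, hs⟩ := mem a ha v
  obtain ⟨t, ht⟩ := mem c hc v
  rw [zero_apply, hs]
  exact hind s t (hs.symm.trans ht)

lemma apply_eq_zero_of_re {T : H →L[ℂ] H} (hT : T.IsPositive) {v : H}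
    (hv : (⟪v, T v⟫).re = 0) : T v = 0 :=
  apply_eq_zero_of_isPositive hT
    (Complex.ext hv (Complex.nonneg_iff.1 (hT.inner_nonneg_right v)).2.symm)

/-- An entangled vector `e₀ ⊗ a + e₁ ⊗ b`, with `a`, `b` independent, does not give a separable
pure state: a product term `ρ₁ ⊗ ρ₂` of a decomposition annihilates each product vector
orthogonal to it, which forces `ρ₂ = 0`. -/
lemma not_cdSeparable (ts : TensorStruct (EuclideanSpace ℂ (Fin 2)) H W) {a b : H}
    (hind : ∀ s t : ℂ, s • a + t • b = 0 → s = 0 ∧ t = 0) {w : W}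
    (hw : ∀ x y, ⟪ts.t x y, w⟫ = ⟪x, EuclideanSpace.single 0 1⟫ * ⟪y, a⟫ +
      ⟪x, EuclideanSpace.single 1 1⟫ * ⟪y, b⟫) :
    ¬ CDSeparable ts (ketbra w w) := by
  rintro ⟨p, ρ1, ρ2, τ, hp, -, h1, h2, hτ, hs⟩
  have hpair : ∀ x y, HasSum (fun n => p n * (⟪x, ρ1 n x⟫.re * ⟪y, ρ2 n y⟫.re))
      (‖⟪ts.t x y, w⟫‖ ^ 2) := by
    intro x y
    have h3 := Complex.hasSum_re (hs.mapL
      ((innerSL ℂ (ts.t x y)) ∘L (ContinuousLinearMap.apply ℂ W (ts.t x y))))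
    refine hasSum_of_eq h3 (fun n => ?_) ?_
    · have e1 := Complex.nonneg_iff.1 ((h1 n).2.1.inner_nonneg_right x)
      simp only [comp_apply, apply_apply, innerSL_apply_apply, smul_apply, inner_smul_right,
        hτ n x x y y, Complex.mul_re, Complex.mul_im, Complex.ofReal_re, Complex.ofReal_im,
        ← e1.2]
      ring
    · simp only [comp_apply, apply_apply, innerSL_apply_apply, ketbra_apply, inner_smul_right]
      rw [← inner_conj_symm w (ts.t x y), mul_comm, Complex.mul_conj, Complex.normSq_eq_norm_sq,
        Complex.ofReal_re]
  have hkill : ∀ n, p n ≠ 0 → ∀ x y, ⟪ts.t x y, w⟫ = 0 → ρ1 n x = 0 ∨ ρ2 n y = 0 := by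
    intro n hn x y hxy
    have h3 := hpair x y
    have hnn : ∀ n, 0 ≤ p n * (⟪x, ρ1 n x⟫.re * ⟪y, ρ2 n y⟫.re) := fun n =>
      mul_nonneg (hp n) (mul_nonneg ((h1 n).2.1.re_inner_nonneg_right x)
        ((h2 n).2.1.re_inner_nonneg_right y))
    rw [hxy, norm_zero, zero_pow two_ne_zero, hasSum_zero_iff_of_nonneg hnn] at h3
    have h4 := congrFun h3 n
    simp only [Pi.zero_apply, mul_eq_zero, hn, false_or] at h4
    exact h4.imp (apply_eq_zero_of_re (h1 n).2.1) (apply_eq_zero_of_re (h2 n).2.1)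
  have hp0 : ∀ n, p n = 0 := by
    intro n
    by_contra hn
    set e0 : EuclideanSpace ℂ (Fin 2) := EuclideanSpace.single 0 1 with he0
    set e1 : EuclideanSpace ℂ (Fin 2) := EuclideanSpace.single 1 1 with he1
    have i00 : ⟪e0, e0⟫ = 1 := by simp [he0]
    have i01 : ⟪e0, e1⟫ = 0 := by simp [he0, he1, EuclideanSpace.inner_single_left]
    have i10 : ⟪e1, e0⟫ = 0 := by simp [he0, he1, EuclideanSpace.inner_single_left]
    have i11 : ⟪e1, e1⟫ = 1 := by simp [he1]
    have k0 : ρ1 n e0 ≠ 0 → ∀ y, ⟪y, a⟫ = 0 → ρ2 n y = 0 := fun h y hy =>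
      (hkill n hn e0 y (by rw [hw, i00, i01, hy]; ring)).resolve_left h
    have k1 : ρ1 n e1 ≠ 0 → ∀ y, ⟪y, b⟫ = 0 → ρ2 n y = 0 := fun h y hy =>
      (hkill n hn e1 y (by rw [hw, i10, i11, hy]; ring)).resolve_left h
    have k2 : ρ1 n (e0 + e1) ≠ 0 → ∀ y, ⟪y, a + b⟫ = 0 → ρ2 n y = 0 := fun h y hy =>
      (hkill n hn (e0 + e1) y (by
        rw [inner_add_right] at hy
        rw [hw, inner_add_left, inner_add_left, i00, i01, i10, i11]
        linear_combination hy)).resolve_left h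
    have hne1 : ρ1 n ≠ 0 := by
      intro h0
      have := (h1 n).2.2
      rw [h0] at this
      simp [trace] at this
    have hne2 : ρ2 n ≠ 0 := by
      intro h0
      have := (h2 n).2.2
      rw [h0] at this
      simp [trace] at this
    by_cases c0 : ρ1 n e0 = 0
    · by_cases c1 : ρ1 n e1 = 0
      · apply hne1
        ext1 x
        have hx : x = x 0 • e0 + x 1 • e1 := by
          ext i
          fin_cases i <;> simp [he0, he1]
        rw [hx, map_add, map_smul, map_smul, c0, c1]
        simp
      · refine hne2 (eq_zero_of_kills (h2 n).2.1 (a := b) (c := a + b) ?_ (k1 c1)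
          (k2 (by rwa [map_add, c0, zero_add])))
        intro s t hst
        obtain ⟨h3, h4⟩ := hind (-t) (s - t) (by
          rw [smul_add] at hst
          rw [sub_smul, hst, neg_smul]; abel)
        have : s = 0 := by linear_combination h4 - h3
        simp [this]
    · by_cases c1 : ρ1 n e1 = 0
      · refine hne2 (eq_zero_of_kills (h2 n).2.1 (a := a) (c := a + b) ?_ (k0 c0)
          (k2 (by rwa [map_add, c1, add_zero])))
        intro s t hst
        obtain ⟨h3, h4⟩ := hind (s - t) (-t) (by
          rw [smul_add] at hst
          rw [sub_smul, hst, neg_smul]; abel)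
        have : s = 0 := by linear_combination h3 - h4
        simp [this]
      · refine hne2 (eq_zero_of_kills (h2 n).2.1 (a := a) (c := b) ?_ (k0 c0) (k1 c1))
        intro s t hst
        obtain ⟨h3, -⟩ := hind s (-t) (by rw [hst, neg_smul]; abel)
        simp [h3]
  have ha : a ≠ 0 := by
    rintro rfl
    exact one_ne_zero (hind 1 0 (by simp)).1
  have h3 := hpair (EuclideanSpace.single 0 1) a
  simp only [hp0, zero_mul] at h3
  have h4 := h3.unique hasSum_zero
  rw [hw] at h4
  simp [ha, EuclideanSpace.inner_single_left] at h4

/-- If `A* x₀` and `A* x₁` are independent, `id ⊗ Φ` sends the normalized pure state of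
`e₀ ⊗ x₀ + e₁ ⊗ x₁` in `ℂ² ⊗ H` to a multiple of the pure state of `e₀ ⊗ A* x₀ + e₁ ⊗ A* x₁`,
which is entangled. -/
lemma exists_ketbra_of_isSEB [SeparableSpace H] (A : H →L[ℂ] H)
    {Φ : (H →L[ℂ] H) → (H →L[ℂ] H)} (hΦ : ∀ T, Φ T = adjoint A ∘L T ∘L A)
    (h : IsSEB Φ) : ∃ x y : H, A = ketbra x y := by
  by_contra hcon
  obtain ⟨x0, hx0⟩ : ∃ x, adjoint A x ≠ 0 := by
    by_contra h0
    push Not at h0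
    exact hcon (exists_ketbra_of_adjoint_mem_span A 0 fun x => ⟨0, by simp [h0]⟩)
  obtain ⟨x1, hx1⟩ : ∃ x, ∀ c : ℂ, adjoint A x ≠ c • adjoint A x0 := by
    by_contra h0
    push Not at h0
    exact hcon (exists_ketbra_of_adjoint_mem_span A (adjoint A x0) h0)
  have hind : ∀ s t : ℂ, s • adjoint A x0 + t • adjoint A x1 = 0 → s = 0 ∧ t = 0 := by
    intro s t hst
    have ht : t = 0 := by
      by_contra ht
      refine hx1 (-(t⁻¹ * s)) ?_
      rw [neg_smul, mul_smul, eq_neg_of_add_eq_zero_left hst, smul_neg, smul_smul,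
        inv_mul_cancel₀ ht, one_smul, neg_neg]
    subst ht
    simpa [hx0] using hst
  obtain ⟨H0, ⟨U⟩⟩ := exists_small_copy H
  set ts := tensorQubit U with hts
  set e : Fin 2 → EuclideanSpace ℂ (Fin 2) := fun i => EuclideanSpace.single i 1 with he
  -- `id ⊗ A*`, assembled from the slices along the standard basis of `ℂ²`
  set L : (PiLp 2 fun _ : Fin 2 => H0.carrier) →L[ℂ] (PiLp 2 fun _ : Fin 2 => H0.carrier) :=
    ∑ i, ts.left (e i) ∘L adjoint A ∘L adjoint (ts.left (e i)) with hLdef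
  have hL : ∀ x y, L (ts.t x y) = ts.t x (adjoint A y) := by
    intro x y
    have hx : x = x 0 • e 0 + x 1 • e 1 := by
      ext i
      fin_cases i <;> simp [he]
    have h1 : L (ts.t x y) = x 0 • ts.t (e 0) (adjoint A y) + x 1 • ts.t (e 1) (adjoint A y) := by
      simp only [hLdef, Fin.sum_univ_two, add_apply, comp_apply, ts.adjoint_left_t, map_smul]
      simp [he, EuclideanSpace.inner_single_left, ts.left_apply]
    rw [h1, ← ts.right_apply, ← ts.right_apply, ← map_smul, ← map_smul, ← map_add, ← hx,
      ts.right_apply]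
  set v := ts.t (e 0) x0 + ts.t (e 1) x1 with hv
  have hLv : L v = ts.t (e 0) (adjoint A x0) + ts.t (e 1) (adjoint A x1) := by
    rw [hv, map_add, hL, hL]
  have hv0 : v ≠ 0 := by
    intro h0
    have h1 : ⟪ts.t (e 0) (adjoint A x0), L v⟫ = 0 := by rw [h0, map_zero, inner_zero_right]
    rw [hLv, inner_add_right, ts.inner_t, ts.inner_t] at h1
    simp [he, hx0, EuclideanSpace.inner_single_left] at h1
  set r : ℂ := ((‖v‖⁻¹ : ℝ) : ℂ) with hr
  have hr0 : r ≠ 0 := by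
    simpa [hr] using hv0
  have hnorm : ‖r • v‖ = 1 := by
    rw [hr, norm_smul, Complex.norm_real, norm_inv, norm_norm,
      inv_mul_cancel₀ (norm_ne_zero_iff.2 hv0)]
  have hsep : CDSeparable ts (ketbra (L (r • v)) (L (r • v))) := by
    refine h ⟨EuclideanSpace ℂ (Fin 2)⟩ ⟨PiLp 2 fun _ : Fin 2 => H0.carrier⟩
      ⟨PiLp 2 fun _ : Fin 2 => H0.carrier⟩ ts ts (ketbra (r • v) (r • v)) _
      (isState_ketbra hnorm) ?_
    refine ⟨Unit, inferInstance, fun _ => adjoint A, A ∘L adjoint A, fun x => ?_, fun T _ => ?_,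
      fun _ => L, fun _ => hL, ?_⟩
    · exact hasSum_of_eq (hasSum_unique _) (fun _ => rfl) (by simp)
    · exact hasSum_of_eq (hasSum_unique _) (fun _ => rfl) (by rw [hΦ, adjoint_adjoint])
    · exact hasSum_of_eq (hasSum_unique _) (fun _ => rfl) (comp_ketbra_comp_adjoint _ _ _).symm
  refine not_cdSeparable ts (a := r • adjoint A x0) (b := r • adjoint A x1) ?_ ?_ hsep
  · intro s t hst
    rw [smul_smul, smul_smul] at hst
    obtain ⟨h1, h2⟩ := hind _ _ hst
    exact ⟨(mul_eq_zero.1 h1).resolve_right hr0, (mul_eq_zero.1 h2).resolve_right hr0⟩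
  · intro x y
    rw [map_smul, hLv, inner_smul_right, inner_add_right, ts.inner_t, ts.inner_t,
      inner_smul_right, inner_smul_right]
    ring

/-! ### The trace form of a rank-one conjugation -/

lemma exists_trace_form_of_ketbra (a b : H) : ∃ R : H →L[ℂ] H, IsTraceClass R ∧ R.IsPositive ∧
    ∀ T, IsTraceClass T → adjoint (ketbra a b) ∘L T ∘L ketbra a b =
      trace (ketbra a b ∘L adjoint (ketbra a b) ∘L T) • R := by
  -- for `b = 0` the inverse below is the junk value `0`, and both sides vanish
  refine ⟨((‖b‖ ^ 2)⁻¹ : ℝ) • ketbra b b, ?_, ?_, fun T _ => ?_⟩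
  · rw [← Complex.coe_smul]
    exact (isTraceClass_ketbra b b).smul _
  · rw [← Complex.coe_smul]
    refine (isPositive_ketbra b).smul_of_nonneg ?_
    exact_mod_cast inv_nonneg.2 (sq_nonneg ‖b‖)
  · have e : ketbra a b ∘L adjoint (ketbra a b) ∘L T =
        ketbra (((‖b‖ ^ 2 : ℝ) : ℂ) • a) (adjoint T a) := by
      ext v
      simp only [adjoint_ketbra, comp_apply, ketbra_apply, inner_smul_right, adjoint_inner_left,
        smul_smul, inner_self_eq_norm_sq_to_K, RCLike.ofReal_eq_complex_ofReal, Complex.ofReal_pow]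
    rw [ketbra_conj, e, trace_ketbra, inner_smul_right, adjoint_inner_left, ← Complex.coe_smul,
      smul_smul]
    by_cases hb : b = 0
    · have : ketbra b b = 0 := by ext v; simp [hb]
      rw [this, smul_zero, smul_zero]
    · have hnb : ‖b‖ ≠ 0 := norm_ne_zero_iff.2 hb
      congr 1
      push_cast
      have : (‖b‖ : ℂ) ≠ 0 := by exact_mod_cast hnb
      field_simp

/-- For `A ∈ B(H)` and the quantum operation `Φ(T) = A* T A`:
(a) `Φ` is degradable; indeed `Γ ∘ Φ` is complementary to `Φ`, where `Γ(T) = tr(T)`;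
(b) `Φ` is anti-degradable iff `Φ` is strongly entanglement breaking, iff there is a positive
trace-class `R` with `Φ(T) = tr(AA*T) R` for all trace-class `T` (forcing `A` to have rank at
most one when `A ≠ 0`). -/
theorem adjointConjugation_degradable_and_antidegradable_iff_SEB
    {H : Type*}
    [NormedAddCommGroup H] [InnerProductSpace ℂ H] [CompleteSpace H] [SeparableSpace H]
    (A : H →L[ℂ] H)
    (Φ : (H →L[ℂ] H) → (H →L[ℂ] H))
    (hΦ : ∀ T, Φ T = adjoint A ∘L T ∘L A)
    (Γ : (H →L[ℂ] H) → (ℂ →L[ℂ] ℂ))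
    (hΓ : ∀ T, Γ T = trace T • (1 : ℂ →L[ℂ] ℂ)) :
    (Degradable Φ ∧ IsComplementary (fun T => Γ (Φ T)) Φ) ∧
    (AntiDegradable Φ ↔ IsSEB Φ) ∧
    (IsSEB Φ ↔ ∃ R : H →L[ℂ] H, IsTraceClass R ∧ R.IsPositive ∧
      ∀ T, IsTraceClass T → Φ T = trace (A ∘L adjoint A ∘L T) • R) ∧
    (IsSEB Φ → ∃ x y : H, A = ketbra x y) := by
  have hG : ∀ T, Φ T = adjoint A ∘L T ∘L adjoint (adjoint A) := fun T => by
    rw [hΦ, adjoint_adjoint]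
  have hSEB : IsSEB Φ ↔ ∃ x y : H, A = ketbra x y := by
    refine ⟨exists_ketbra_of_isSEB A hΦ, ?_⟩
    rintro ⟨a, b, rfl⟩
    exact isSEB_of_ketbra a b hΦ
  have hAnti : AntiDegradable Φ ↔ ∃ x y : H, A = ketbra x y := by
    refine ⟨exists_ketbra_of_antiDegradable A hΦ, ?_⟩
    rintro ⟨a, b, rfl⟩
    exact antiDegradable_of_ketbra a b hΦ
  refine ⟨⟨degradable_of_conj (adjoint A) fun T _ => hG T, ?_⟩, hAnti.trans hSEB.symm,
    hSEB.trans ⟨?_, ?_⟩, hSEB.1⟩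
  · have hcompl := isComplementary_trace_conj (adjoint A)
    simp only [← hG, ← hΓ] at hcompl
    exact hcompl
  · rintro ⟨a, b, rfl⟩
    simp only [hΦ]
    exact exists_trace_form_of_ketbra a b
  · rintro ⟨R, -, -, hR⟩
    exact exists_ketbra_of_forall_smul A R fun T hT => ⟨_, (hΦ T).symm.trans (hR T hT)⟩

end PaperInf
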